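/- Let G be the graph with vertex set {1,2,3,4,5,6} and edge set {{1,2},{2,3},{2,4},{2,5},{3,4},{4,5},{5,6}}. Then S/J_G is Cohen–Macaulay. -/

import Mathlib

open MvPolynomial

noncomputable section

/-- The binomial edge ideal of a simple graph `G` on vertex type `V`, inside the
polynomial ring `K[x_i, y_i : i ∈ V]`, modelled as `MvPolynomial (V ⊕ V) K`
with `x_i = X (Sum.inl i)` and `y_i = X (Sum.inr i)`. -/
def binomialEdgeIdeal (K : Type*) [Field K] {V : Type*} (G : SimpleGraph V) :
    Ideal (MvPolynomial (V ⊕ V) K) :=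
  Ideal.span { f | ∃ i j : V, G.Adj i j ∧
    f = X (Sum.inl i) * X (Sum.inr j) - X (Sum.inl j) * X (Sum.inr i) }

/-- The minimal number of generators of an ideal. -/
def mu {R : Type*} [CommRing R] (J : Ideal R) : ℕ :=
  sInf {k | ∃ s : Finset R, s.card = k ∧ Ideal.span (s : Set R) = J}

/-- The height of an ideal: the infimum of the heights of the primes containing it. -/
def htI {R : Type*} [CommRing R] (I : Ideal R) : ℕ∞ :=
  ⨅ (P : PrimeSpectrum R) (_ : I ≤ P.asIdeal), Order.height P

/-- An ideal is unmixed if all of its minimal primes have height equal to its height. -/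
def IsUnmixed {R : Type*} [CommRing R] (I : Ideal R) : Prop :=
  ∀ P ∈ I.minimalPrimes, htI P = htI I

/-- The depth of a ring `R` with respect to an ideal `m`: the supremum of the
lengths of regular sequences on `R` consisting of elements of `m`. -/
def ringDepth (R : Type*) [CommRing R] (m : Ideal R) : ℕ∞ :=
  sSup {d : ℕ∞ | ∃ l : List R, (l.length : ℕ∞) = d ∧ (∀ x ∈ l, x ∈ m) ∧
    RingTheory.Sequence.IsRegular R l}

/-- The graded maximal ideal of the quotient of a polynomial ring by an ideal `J`:
the image of the ideal generated by all the variables. -/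
def gradedMaxQuot {K σ : Type*} [Field K] (J : Ideal (MvPolynomial σ K)) :
    Ideal (MvPolynomial σ K ⧸ J) :=
  (Ideal.span (Set.range (X : σ → MvPolynomial σ K))).map (Ideal.Quotient.mk J)

/-- `S/J` is Cohen–Macaulay: its depth with respect to the graded maximal ideal
equals its Krull dimension. -/
def IsCMQuot {K σ : Type*} [Field K] (J : Ideal (MvPolynomial σ K)) : Prop :=
  (ringDepth (MvPolynomial σ K ⧸ J) (gradedMaxQuot J) : WithBot ℕ∞) =
    ringKrullDim (MvPolynomial σ K ⧸ J)

/-- A graph is a path graph if its vertices can be ordered `v_1, …, v_m` so that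
its edges are exactly `{v_i, v_{i+1}}` for `1 ≤ i ≤ m - 1`. -/
def IsPathGraph {V : Type*} (H : SimpleGraph V) : Prop :=
  ∃ (m : ℕ) (e : V ≃ Fin m), ∀ a b : V,
    H.Adj a b ↔ ((e a : ℕ) + 1 = (e b : ℕ) ∨ (e b : ℕ) + 1 = (e a : ℕ))

/-- The vertex set of a connected component, as a set of vertices. -/
def compSupp {V : Type*} (G : SimpleGraph V) (c : G.ConnectedComponent) : Set V :=
  {v | G.connectedComponentMk v = c}

end

noncomputable section

/-- The graph of Lemma 2.5: vertex set `{1,…,6}` (modelled as `Fin 6`, with vertex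
`i` corresponding to `i - 1`) and edge set
`{{1,2},{2,3},{2,4},{2,5},{3,4},{4,5},{5,6}}`. -/
def fanGraph : SimpleGraph (Fin 6) :=
  SimpleGraph.fromRel (fun a b =>
    (a, b) ∈ ([(0, 1), (1, 2), (1, 3), (1, 4), (2, 3), (3, 4), (4, 5)] :
      List (Fin 6 × Fin 6)))

open RingTheory.Sequence in
/-- The length of a regular sequence on a finite module is at most the dimension of its support. -/
lemma length_le_supportDim_of_isRegular {R : Type*} [CommRing R] (l : List R) :
    ∀ {M : Type _} [AddCommGroup M] [Module R M] [Module.Finite R M],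
      IsRegular M l → (l.length : WithBot ℕ∞) ≤ Module.supportDim R M := by
  induction l with
  | nil =>
    intro M _ _ _ h
    have := h.nontrivial
    have hbot := Module.supportDim_ne_bot_of_nontrivial R M
    obtain ⟨d, hd⟩ := WithBot.ne_bot_iff_exists.mp hbot
    rw [← hd]
    exact WithBot.coe_le_coe.mpr (zero_le)
  | cons r l ih =>
    intro M _ _ _ h
    rw [isRegular_cons_iff] at h
    calc ((r :: l).length : WithBot ℕ∞) = (l.length : WithBot ℕ∞) + 1 := by simp
      _ ≤ Module.supportDim R (QuotSMulTop r M) + 1 := by gcongr; exact ih h.2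
      _ ≤ Module.supportDim R M :=
        Module.supportDim_quotSMulTop_succ_le_of_notMem_minimalPrimes
          fun _ ↦ h.1.notMem_of_mem_minimalPrimes

/-- The depth of a ring with respect to any ideal is at most its Krull dimension. -/
lemma ringDepth_le_ringKrullDim {R : Type*} [CommRing R] [Nontrivial R] (m : Ideal R) :
    (ringDepth R m : WithBot ℕ∞) ≤ ringKrullDim R := by
  obtain ⟨d, hd⟩ := WithBot.ne_bot_iff_exists.mp
    (ne_bot_of_le_ne_bot WithBot.zero_ne_bot (ringKrullDim_nonneg_of_nontrivial (R := R)))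
  rw [← hd]
  refine WithBot.coe_le_coe.mpr (sSup_le ?_)
  rintro _ ⟨l, rfl, -, hl⟩
  have := length_le_supportDim_of_isRegular l hl
  rw [Module.supportDim_self_eq_ringKrullDim, ← hd] at this
  exact WithBot.coe_le_coe.mp this

/-- An integral extension does not raise the Krull dimension. -/
lemma ringKrullDim_le_of_isIntegral (A R : Type*) [CommRing A] [CommRing R] [Algebra A R]
    [Algebra.IsIntegral A R] : ringKrullDim R ≤ ringKrullDim A := by
  refine Order.krullDim_le_of_strictMono (PrimeSpectrum.comap (algebraMap A R)) fun P Q h ↦ ?_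
  exact Ideal.IsIntegral.comap_lt_comap h

/-- The variables of a polynomial ring over a field form a regular sequence. -/
lemma isRegular_ofFn_X (K : Type*) [Field K] (n : ℕ) :
    RingTheory.Sequence.IsRegular (MvPolynomial (Fin n) K)
      (List.ofFn (X : Fin n → MvPolynomial (Fin n) K)) := by
  refine ⟨⟨fun i hi ↦ ?_⟩, ?_⟩
  · have hin : i < n := by simpa using hi
    have hideal : (Ideal.ofList ((List.ofFn (X : Fin n → MvPolynomial (Fin n) K)).take i) •
        ⊤ : Submodule (MvPolynomial (Fin n) K) (MvPolynomial (Fin n) K)) =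
        Ideal.span (X '' {j : Fin n | (j : ℕ) < i}) := by
      rw [smul_eq_mul, Ideal.mul_top, Ideal.ofList]
      congr 1
      ext f
      simp only [Set.mem_ofPred_eq, List.mem_take_iff_getElem, Set.mem_image]
      constructor
      · rintro ⟨j, hj, rfl⟩
        simp only [List.length_ofFn, lt_min_iff] at hj
        exact ⟨⟨j, hj.2⟩, hj.1, by simp⟩
      · rintro ⟨j, hj, rfl⟩
        exact ⟨j, by simp [hj], by simp⟩
    rw [hideal, isSMulRegular_quotient_iff_mem_of_smul_mem]
    intro p hp
    rw [List.getElem_ofFn, smul_eq_mul, mem_ideal_span_X_image] at hp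
    rw [mem_ideal_span_X_image]
    intro m hm
    obtain ⟨j, hj, hjm⟩ := hp (Finsupp.single ⟨i, hin⟩ 1 + m) (by
      rw [mem_support_iff, coeff_X_mul]; exact mem_support_iff.mp hm)
    refine ⟨j, hj, ?_⟩
    have hne : (⟨i, hin⟩ : Fin n) ≠ j := by
      rintro rfl
      simp at hj
    simpa [Finsupp.single_apply, hne] using hjm
  · rw [smul_eq_mul, Ideal.mul_top]
    intro htop
    have hle : Ideal.ofList (List.ofFn (X : Fin n → MvPolynomial (Fin n) K)) ≤
        RingHom.ker (constantCoeff (R := K) (σ := Fin n)) := by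
      rw [Ideal.ofList, Ideal.span_le]
      intro f hf
      obtain ⟨j, rfl⟩ := (List.mem_ofFn' _ _).mp hf
      simp
    have h1 := hle (htop ▸ Submodule.mem_top : (1 : MvPolynomial (Fin n) K) ∈ _)
    simp at h1

/-- A nonzero algebra that is finite and free over a polynomial ring has depth equal to its
dimension, with respect to any ideal containing the images of the variables. -/
lemma ringDepth_eq_ringKrullDim_of_finite_free {K R : Type*} [Field K] {n : ℕ} [CommRing R]
    [Nontrivial R] [Algebra (MvPolynomial (Fin n) K) R] [Module.Finite (MvPolynomial (Fin n) K) R]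
    [Module.Free (MvPolynomial (Fin n) K) R] (m : Ideal R)
    (hm : ∀ i, algebraMap (MvPolynomial (Fin n) K) R (X i) ∈ m) :
    (ringDepth R m : WithBot ℕ∞) = ringKrullDim R := by
  refine le_antisymm (ringDepth_le_ringKrullDim m) ?_
  calc ringKrullDim R ≤ ringKrullDim (MvPolynomial (Fin n) K) := ringKrullDim_le_of_isIntegral _ _
    _ = ((n : ℕ∞) : WithBot ℕ∞) := by
      rw [MvPolynomial.ringKrullDim_of_isNoetherianRing, ringKrullDim_eq_zero_of_field]
      simp
    _ ≤ ringDepth R m := by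
      refine WithBot.coe_le_coe.mpr (le_sSup ?_)
      refine ⟨(List.ofFn X).map (algebraMap (MvPolynomial (Fin n) K) R), by simp, ?_,
        (isRegular_ofFn_X K n).of_faithfullyFlat⟩
      intro x hx
      obtain ⟨f, hf, rfl⟩ := List.mem_map.mp hx
      obtain ⟨j, rfl⟩ := (List.mem_ofFn' _ _).mp hf
      exact hm j

/-- The squarefree monomials in `x 1, …, x 5` that form a basis of the coordinate ring of the fan
graph over the polynomial ring in the seven parameters `x 0`, `y i - x (i + 1)` and `y 5`; the
digits of a constructor are the indices of the factors. -/
inductive FanMonomial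
  | one | z1 | z2 | z3 | z4 | z12 | z13 | z14 | z34
  | z5 | z15 | z25 | z35 | z45 | z125 | z135 | z145 | z345
  deriving DecidableEq

instance : Fintype FanMonomial where
  elems := {.one, .z1, .z2, .z3, .z4, .z12, .z13, .z14, .z34,
    .z5, .z15, .z25, .z35, .z45, .z125, .z135, .z145, .z345}
  complete b := by cases b <;> decide

section FanMultiplication

variable {A : Type*} [CommRing A] (t : Fin 7 → A)

/-- The coordinates of `x 1 * ∑ b, v b * b`, where `b` runs over the fan monomials. -/
def fanMulFun1 (v : FanMonomial → A) : FanMonomial → A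
  | .one => t 0 * t 2 * v .z1 + t 0 * t 2 * t 5 * t 6 * v .z345
  | .z1 => v .one - t 1 * v .z1 + t 0 * t 3 * v .z12 + t 0 * t 4 * v .z13 + t 0 * t 5 * v .z14
    - t 1 * t 5 * t 6 * v .z345
  | .z2 => t 0 * v .z1 + t 0 * t 5 * t 6 * v .z345
  | .z3 => 0
  | .z4 => 0
  | .z12 => v .z2 - t 1 * v .z12 + t 5 * v .z34
  | .z13 => v .z3 + t 0 * v .z12 - t 1 * v .z13
  | .z14 => v .z4 + t 0 * v .z13 - t 1 * v .z14 - t 3 * v .z34 + t 0 * t 6 * v .z145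
    - t 2 * t 6 * v .z345
  | .z34 => 0
  | .z5 => t 0 * t 2 * v .z15 + t 0 * t 2 * t 6 * v .z345
  | .z15 => t 0 * v .z14 + v .z5 - t 1 * v .z15 + t 0 * t 3 * v .z125 + t 0 * t 4 * v .z135
    - t 1 * t 6 * v .z345
  | .z25 => t 0 * v .z15 + t 0 * t 6 * v .z345
  | .z35 => 0
  | .z45 => 0
  | .z125 => v .z34 + v .z25 - t 1 * v .z125
  | .z135 => v .z35 + t 0 * v .z125 - t 1 * v .z135
  | .z145 => v .z45 + t 0 * v .z135 - t 1 * v .z145 - t 3 * v .z345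
  | .z345 => 0

/-- The coordinates of `x 2 * ∑ b, v b * b`, where `b` runs over the fan monomials. -/
def fanMulFun2 (v : FanMonomial → A) : FanMonomial → A
  | .one => t 0 * t 2 * t 3 * v .z12 + t 0 * t 2 * t 4 * v .z13 + t 0 * t 2 * t 5 * v .z14
  | .z1 => t 3 * v .z2 + t 4 * v .z3 + t 5 * v .z4 - t 1 * t 3 * v .z12 + t 0 * t 4 * v .z12
    - t 1 * t 4 * v .z13 + t 0 * t 5 * v .z13 - t 1 * t 5 * v .z14 + t 0 * t 5 * t 6 * v .z145
  | .z2 => v .one - t 2 * v .z2 + t 0 * t 3 * v .z12 + t 0 * t 4 * v .z13 + t 0 * t 5 * v .z14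
  | .z3 => -t 2 * v .z3
  | .z4 => -t 2 * v .z4
  | .z12 => v .z1 - t 2 * v .z12 + t 5 * t 6 * v .z345
  | .z13 => v .z2 - t 1 * v .z12 - t 2 * v .z13 + t 5 * v .z34
  | .z14 => v .z3 + t 0 * v .z12 - t 1 * v .z13 - t 2 * v .z14 + t 6 * v .z45
    + t 0 * t 6 * v .z135 - t 1 * t 6 * v .z145 - t 3 * t 6 * v .z345
  | .z34 => -t 2 * v .z34
  | .z5 => t 0 * t 2 * v .z14 + t 0 * t 2 * t 3 * v .z125 + t 0 * t 2 * t 4 * v .z135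
  | .z15 => v .z4 + t 0 * v .z13 - t 1 * v .z14 + t 3 * v .z25 + t 4 * v .z35
    - t 1 * t 3 * v .z125 + t 0 * t 4 * v .z125 - t 1 * t 4 * v .z135 + t 0 * t 6 * v .z145
  | .z25 => t 0 * v .z14 + v .z5 - t 2 * v .z25 + t 0 * t 3 * v .z125 + t 0 * t 4 * v .z135
  | .z35 => -t 2 * v .z35
  | .z45 => -t 2 * v .z45
  | .z125 => v .z15 - t 2 * v .z125 + t 6 * v .z345
  | .z135 => v .z34 + v .z25 - t 1 * v .z125 - t 2 * v .z135
  | .z145 => v .z35 + t 0 * v .z125 - t 1 * v .z135 - t 2 * v .z145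
  | .z345 => -t 2 * v .z345

/-- The coordinates of `x 3 * ∑ b, v b * b`, where `b` runs over the fan monomials. -/
def fanMulFun3 (v : FanMonomial → A) : FanMonomial → A
  | .one => t 0 * t 2 * t 4 * v .z12 + t 0 * t 2 * t 5 * v .z13 + t 0 * t 2 * t 5 * t 6 * v .z145
  | .z1 => t 4 * v .z2 + t 5 * v .z3 - t 1 * t 4 * v .z12 + t 0 * t 5 * v .z12
    - t 1 * t 5 * v .z13 + t 4 * t 5 * v .z34 + t 0 * t 5 * t 6 * v .z135
    - t 1 * t 5 * t 6 * v .z145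
  | .z2 => t 4 * v .z3 + t 0 * t 4 * v .z12 + t 0 * t 5 * v .z13 + t 0 * t 5 * t 6 * v .z145
  | .z3 => v .one - t 2 * v .z2 - t 3 * v .z3 - t 2 * t 5 * v .z34
  | .z4 => -t 2 * v .z3
  | .z12 => t 4 * v .z13 + t 5 * v .z14
  | .z13 => v .z1 - t 2 * v .z12 - t 3 * v .z13 + t 5 * t 6 * v .z345
  | .z14 => v .z2 - t 1 * v .z12 - t 2 * v .z13 - t 3 * v .z14 + t 5 * v .z34 + t 6 * v .z35
    + t 0 * t 6 * v .z125 - t 1 * t 6 * v .z135 - t 2 * t 6 * v .z145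
  | .z34 => v .z4 - t 3 * v .z34 - t 2 * t 6 * v .z345
  | .z5 => t 0 * t 2 * v .z13 + t 0 * t 2 * t 4 * v .z125 + t 0 * t 2 * t 6 * v .z145
  | .z15 => v .z3 + t 0 * v .z12 - t 1 * v .z13 + t 4 * v .z34 + t 4 * v .z25
    - t 1 * t 4 * v .z125 + t 0 * t 6 * v .z135 - t 1 * t 6 * v .z145
  | .z25 => t 0 * v .z13 + t 4 * v .z35 + t 0 * t 4 * v .z125 + t 0 * t 6 * v .z145
  | .z35 => -t 2 * v .z34 + v .z5 - t 2 * v .z25 - t 3 * v .z35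
  | .z45 => -t 2 * v .z35
  | .z125 => v .z14 + t 4 * v .z135
  | .z135 => v .z15 - t 2 * v .z125 - t 3 * v .z135 + t 6 * v .z345
  | .z145 => v .z34 + v .z25 - t 1 * v .z125 - t 2 * v .z135 - t 3 * v .z145
  | .z345 => v .z45 - t 3 * v .z345

/-- The coordinates of `x 4 * ∑ b, v b * b`, where `b` runs over the fan monomials. -/
def fanMulFun4 (v : FanMonomial → A) : FanMonomial → A
  | .one => t 0 * t 2 * t 5 * v .z12 + t 0 * t 2 * t 5 * t 6 * v .z135
  | .z1 => t 5 * v .z2 - t 1 * t 5 * v .z12 + t 5 ^ 2 * v .z34 + t 0 * t 5 * t 6 * v .z125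
    - t 1 * t 5 * t 6 * v .z135 + t 4 * t 5 * t 6 * v .z345
  | .z2 => t 0 * t 5 * v .z12 + t 4 * t 5 * v .z34 + t 0 * t 5 * t 6 * v .z135
  | .z3 => t 5 * v .z4 - t 3 * t 5 * v .z34 - t 2 * t 5 * t 6 * v .z345
  | .z4 => v .one - t 2 * v .z2 - t 4 * v .z4 - t 2 * t 5 * v .z34
  | .z12 => t 5 * v .z13 + t 5 * t 6 * v .z145
  | .z13 => t 5 * v .z14
  | .z14 => v .z1 - t 2 * v .z12 - t 3 * v .z13 - t 4 * v .z14 + t 6 * v .z34 + t 6 * v .z25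
    - t 1 * t 6 * v .z125 - t 2 * t 6 * v .z135 - t 3 * t 6 * v .z145 + t 5 * t 6 * v .z345
  | .z34 => v .z3 - t 4 * v .z34 + t 6 * v .z45 - t 3 * t 6 * v .z345
  | .z5 => t 0 * t 2 * v .z12 + t 0 * t 2 * t 6 * v .z135
  | .z15 => v .z2 - t 1 * v .z12 + t 5 * v .z34 + t 0 * t 6 * v .z125 - t 1 * t 6 * v .z135
    + t 4 * t 6 * v .z345
  | .z25 => t 0 * v .z12 + t 4 * v .z34 + t 0 * t 6 * v .z135
  | .z35 => v .z4 - t 3 * v .z34 - t 2 * t 6 * v .z345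
  | .z45 => -t 2 * v .z34 + v .z5 - t 2 * v .z25 - t 4 * v .z45
  | .z125 => v .z13 + t 6 * v .z145
  | .z135 => v .z14
  | .z145 => v .z15 - t 2 * v .z125 - t 3 * v .z135 - t 4 * v .z145 + t 6 * v .z345
  | .z345 => v .z35 - t 4 * v .z345

/-- The coordinates of `x 5 * ∑ b, v b * b`, where `b` runs over the fan monomials. -/
def fanMulFun5 (v : FanMonomial → A) : FanMonomial → A
  | .one => t 0 * t 2 * t 5 * t 6 * v .z125
  | .z1 => t 5 * t 6 * v .z25 - t 1 * t 5 * t 6 * v .z125 + t 5 ^ 2 * t 6 * v .z345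
  | .z2 => t 0 * t 5 * t 6 * v .z125 + t 4 * t 5 * t 6 * v .z345
  | .z3 => t 5 * t 6 * v .z45 - t 3 * t 5 * t 6 * v .z345
  | .z4 => t 6 * v .z5 - t 2 * t 6 * v .z25 - t 4 * t 6 * v .z45 - t 2 * t 5 * t 6 * v .z345
  | .z12 => t 5 * t 6 * v .z135
  | .z13 => t 5 * t 6 * v .z145
  | .z14 => t 6 * v .z15 - t 2 * t 6 * v .z125 - t 3 * t 6 * v .z135 - t 4 * t 6 * v .z145
    + t 6 ^ 2 * v .z345
  | .z34 => t 6 * v .z35 - t 4 * t 6 * v .z345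
  | .z5 => v .one - t 5 * v .z5 + t 0 * t 2 * t 6 * v .z125
  | .z15 => v .z1 - t 5 * v .z15 + t 6 * v .z25 - t 1 * t 6 * v .z125 + t 5 * t 6 * v .z345
  | .z25 => v .z2 - t 5 * v .z25 + t 0 * t 6 * v .z125 + t 4 * t 6 * v .z345
  | .z35 => v .z3 - t 5 * v .z35 + t 6 * v .z45 - t 3 * t 6 * v .z345
  | .z45 => v .z4 - t 5 * v .z45 - t 2 * t 6 * v .z345
  | .z125 => v .z12 - t 5 * v .z125 + t 6 * v .z135
  | .z135 => v .z13 - t 5 * v .z135 + t 6 * v .z145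
  | .z145 => v .z14 - t 5 * v .z145
  | .z345 => v .z34 - t 5 * v .z345

/-- The action of `x i` on the free module on the fan monomials, for parameter values `t`. -/
def fanMul (i : Fin 6) : Module.End A (FanMonomial → A) where
  toFun v := match i with
    | 0 => t 0 • v
    | 1 => fanMulFun1 t v
    | 2 => fanMulFun2 t v
    | 3 => fanMulFun3 t v
    | 4 => fanMulFun4 t v
    | 5 => fanMulFun5 t v
  map_add' v w := by
    fin_cases i
    · exact smul_add _ _ _
    all_goals
      ext b
      cases b <;>
      simp only [fanMulFun1, fanMulFun2, fanMulFun3, fanMulFun4, fanMulFun5, Pi.add_apply] <;> ring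
  map_smul' c v := by
    fin_cases i
    · exact smul_comm _ _ _
    all_goals
      ext b
      cases b <;>
      simp only [fanMulFun1, fanMulFun2, fanMulFun3, fanMulFun4, fanMulFun5, Pi.smul_apply,
        smul_eq_mul, RingHom.id_apply] <;> ring

lemma fanMul_zero : fanMul t 0 = algebraMap A _ (t 0) := rfl

lemma fanMul_1_apply (v : FanMonomial → A) : fanMul t 1 v = fanMulFun1 t v := rfl

lemma fanMul_2_apply (v : FanMonomial → A) : fanMul t 2 v = fanMulFun2 t v := rfl

lemma fanMul_3_apply (v : FanMonomial → A) : fanMul t 3 v = fanMulFun3 t v := rfl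

lemma fanMul_4_apply (v : FanMonomial → A) : fanMul t 4 v = fanMulFun4 t v := rfl

lemma fanMul_5_apply (v : FanMonomial → A) : fanMul t 5 v = fanMulFun5 t v := rfl

lemma commute_fanMul_1_2 : Commute (fanMul t 1) (fanMul t 2) := by
  refine LinearMap.ext fun v ↦ funext fun b ↦ ?_
  simp only [Module.End.mul_apply, fanMul_1_apply, fanMul_2_apply]
  cases b <;> simp only [fanMulFun1, fanMulFun2] <;> ring

lemma commute_fanMul_1_3 : Commute (fanMul t 1) (fanMul t 3) := by
  refine LinearMap.ext fun v ↦ funext fun b ↦ ?_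
  simp only [Module.End.mul_apply, fanMul_1_apply, fanMul_3_apply]
  cases b <;> simp only [fanMulFun1, fanMulFun3] <;> ring

lemma commute_fanMul_1_4 : Commute (fanMul t 1) (fanMul t 4) := by
  refine LinearMap.ext fun v ↦ funext fun b ↦ ?_
  simp only [Module.End.mul_apply, fanMul_1_apply, fanMul_4_apply]
  cases b <;> simp only [fanMulFun1, fanMulFun4] <;> ring

lemma commute_fanMul_1_5 : Commute (fanMul t 1) (fanMul t 5) := by
  refine LinearMap.ext fun v ↦ funext fun b ↦ ?_
  simp only [Module.End.mul_apply, fanMul_1_apply, fanMul_5_apply]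
  cases b <;> simp only [fanMulFun1, fanMulFun5] <;> ring

lemma commute_fanMul_2_3 : Commute (fanMul t 2) (fanMul t 3) := by
  refine LinearMap.ext fun v ↦ funext fun b ↦ ?_
  simp only [Module.End.mul_apply, fanMul_2_apply, fanMul_3_apply]
  cases b <;> simp only [fanMulFun2, fanMulFun3] <;> ring

lemma commute_fanMul_2_4 : Commute (fanMul t 2) (fanMul t 4) := by
  refine LinearMap.ext fun v ↦ funext fun b ↦ ?_
  simp only [Module.End.mul_apply, fanMul_2_apply, fanMul_4_apply]
  cases b <;> simp only [fanMulFun2, fanMulFun4] <;> ring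

lemma commute_fanMul_2_5 : Commute (fanMul t 2) (fanMul t 5) := by
  refine LinearMap.ext fun v ↦ funext fun b ↦ ?_
  simp only [Module.End.mul_apply, fanMul_2_apply, fanMul_5_apply]
  cases b <;> simp only [fanMulFun2, fanMulFun5] <;> ring

lemma commute_fanMul_3_4 : Commute (fanMul t 3) (fanMul t 4) := by
  refine LinearMap.ext fun v ↦ funext fun b ↦ ?_
  simp only [Module.End.mul_apply, fanMul_3_apply, fanMul_4_apply]
  cases b <;> simp only [fanMulFun3, fanMulFun4] <;> ring

lemma commute_fanMul_3_5 : Commute (fanMul t 3) (fanMul t 5) := by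
  refine LinearMap.ext fun v ↦ funext fun b ↦ ?_
  simp only [Module.End.mul_apply, fanMul_3_apply, fanMul_5_apply]
  cases b <;> simp only [fanMulFun3, fanMulFun5] <;> ring

lemma commute_fanMul_4_5 : Commute (fanMul t 4) (fanMul t 5) := by
  refine LinearMap.ext fun v ↦ funext fun b ↦ ?_
  simp only [Module.End.mul_apply, fanMul_4_apply, fanMul_5_apply]
  cases b <;> simp only [fanMulFun4, fanMulFun5] <;> ring

lemma commute_fanMul (i j : Fin 6) : Commute (fanMul t i) (fanMul t j) := by
  wlog hij : i ≤ j generalizing i j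
  · exact (this j i (le_of_not_ge hij)).symm
  obtain rfl | hij := hij.eq_or_lt
  · exact Commute.refl _
  obtain rfl | hi := eq_or_ne i 0
  · rw [fanMul_zero]
    exact Algebra.commutes _ _
  fin_cases i <;> fin_cases j <;> first
    | exact absurd hij (by decide)
    | exact absurd rfl hi
    | exact commute_fanMul_1_2 t
    | exact commute_fanMul_1_3 t
    | exact commute_fanMul_1_4 t
    | exact commute_fanMul_1_5 t
    | exact commute_fanMul_2_3 t
    | exact commute_fanMul_2_4 t
    | exact commute_fanMul_2_5 t
    | exact commute_fanMul_3_4 t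
    | exact commute_fanMul_3_5 t
    | exact commute_fanMul_4_5 t

end FanMultiplication

/-- The equations of the fan graph, rewritten in terms of `x` and the parameters `s`, where
`s 0 = x 0`, `s (i + 1) = y i - x (i + 1)` and `s 6 = y 5`. -/
structure FanRelations {R : Type*} [CommRing R] (s : Fin 7 → R) (x : Fin 6 → R) : Prop where
  sq_one : x 1 * x 1 = s 0 * x 2 - s 1 * x 1 + s 0 * s 2
  sq_two : x 2 * x 2 = x 1 * x 3 - s 2 * x 2 + s 3 * x 1
  two_three : x 2 * x 3 = x 1 * x 4 - s 2 * x 3 + s 4 * x 1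
  two_four : x 2 * x 4 = x 1 * x 5 - s 2 * x 4 + s 5 * x 1
  sq_three : x 3 * x 3 = x 1 * x 5 - s 2 * x 4 - s 3 * x 3 + s 4 * x 2 + s 5 * x 1
  sq_four : x 4 * x 4 = x 3 * x 5 - s 4 * x 4 + s 5 * x 3
  sq_five : x 5 * x 5 = s 6 * x 4 - s 5 * x 5


lemma FanRelations.cubic {R : Type*} [CommRing R] {s : Fin 7 → R} {x : Fin 6 → R}
    (h : FanRelations s x) :
    x 1 * x 3 * x 4 = x 1 * x 2 * x 5 - s 3 * x 1 * x 4 + s 5 * x 1 * x 2 := by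
  linear_combination x 2 * h.two_four - x 4 * h.sq_two

section FanExpansion

variable {A R : Type*} [CommRing A] [CommRing R] [Algebra A R]

/-- The linear combination of the fan monomials in `x` with coefficients `v`. -/
def fanExpand (x : Fin 6 → R) : (FanMonomial → A) →ₗ[A] R where
  toFun v :=
    algebraMap A R (v .one) + algebraMap A R (v .z1) * x 1 + algebraMap A R (v .z2) * x 2
      + algebraMap A R (v .z3) * x 3 + algebraMap A R (v .z4) * x 4
      + algebraMap A R (v .z12) * x 1 * x 2 + algebraMap A R (v .z13) * x 1 * x 3
      + algebraMap A R (v .z14) * x 1 * x 4 + algebraMap A R (v .z34) * x 3 * x 4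
      + algebraMap A R (v .z5) * x 5 + algebraMap A R (v .z15) * x 1 * x 5
      + algebraMap A R (v .z25) * x 2 * x 5 + algebraMap A R (v .z35) * x 3 * x 5
      + algebraMap A R (v .z45) * x 4 * x 5 + algebraMap A R (v .z125) * x 1 * x 2 * x 5
      + algebraMap A R (v .z135) * x 1 * x 3 * x 5 + algebraMap A R (v .z145) * x 1 * x 4 * x 5
      + algebraMap A R (v .z345) * x 3 * x 4 * x 5
  map_add' v w := by simp only [Pi.add_apply, map_add]; ring
  map_smul' c v := by
    simp only [Pi.smul_apply, smul_eq_mul, map_mul, RingHom.id_apply, Algebra.smul_def]; ring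

lemma fanExpand_apply (x : Fin 6 → R) (v : FanMonomial → A) : fanExpand x v =
    algebraMap A R (v .one) + algebraMap A R (v .z1) * x 1 + algebraMap A R (v .z2) * x 2
      + algebraMap A R (v .z3) * x 3 + algebraMap A R (v .z4) * x 4
      + algebraMap A R (v .z12) * x 1 * x 2 + algebraMap A R (v .z13) * x 1 * x 3
      + algebraMap A R (v .z14) * x 1 * x 4 + algebraMap A R (v .z34) * x 3 * x 4
      + algebraMap A R (v .z5) * x 5 + algebraMap A R (v .z15) * x 1 * x 5
      + algebraMap A R (v .z25) * x 2 * x 5 + algebraMap A R (v .z35) * x 3 * x 5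
      + algebraMap A R (v .z45) * x 4 * x 5 + algebraMap A R (v .z125) * x 1 * x 2 * x 5
      + algebraMap A R (v .z135) * x 1 * x 3 * x 5 + algebraMap A R (v .z145) * x 1 * x 4 * x 5
      + algebraMap A R (v .z345) * x 3 * x 4 * x 5 := rfl

variable {t : Fin 7 → A} {x : Fin 6 → R}

lemma mul_fanExpand_1 (h : FanRelations (fun k ↦ algebraMap A R (t k)) x)
    (v : FanMonomial → A) : x 1 * fanExpand x v = fanExpand x (fanMul t 1 v) := by
  simp only [fanExpand_apply, fanMul_1_apply, fanMulFun1, map_add, map_sub, map_mul, map_zero]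
  set a := algebraMap A R
  set s : Fin 7 → R := fun k ↦ a (t k)
  linear_combination
    (a (v .z1) + a (v .z12) * x 2 + a (v .z13) * x 3 + a (v .z14) * x 4 + a (v .z15) * x 5
      + a (v .z125) * x 2 * x 5 + a (v .z135) * x 3 * x 5 + a (v .z145) * x 4 * x 5
      + a (v .z345) * (x 5 * s 6 + s 5 * s 6)) * h.sq_one + (a (v .z12) * s 0
      + a (v .z125) * x 5 * s 0) * h.sq_two + (a (v .z13) * s 0
      + a (v .z135) * x 5 * s 0) * h.two_three
      + (a (v .z14) * s 0 + a (v .z145) * x 5 * s 0 + a (v .z345) * x 1 * s 6) * h.two_four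
      + (a (v .z145) * x 1 * s 0 + a (v .z345) * x 1 * x 2) * h.sq_five + (a (v .z34)
      + a (v .z345) * x 5) * h.cubic

lemma mul_fanExpand_2 (h : FanRelations (fun k ↦ algebraMap A R (t k)) x)
    (v : FanMonomial → A) : x 2 * fanExpand x v = fanExpand x (fanMul t 2 v) := by
  simp only [fanExpand_apply, fanMul_2_apply, fanMulFun2, map_add, map_sub, map_neg, map_mul]
  set a := algebraMap A R
  set s : Fin 7 → R := fun k ↦ a (t k)
  linear_combination
    (a (v .z12) * (x 3 + s 3) + a (v .z13) * (x 4 + s 4) + a (v .z14) * (x 5 + s 5)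
      + a (v .z125) * (x 3 * x 5 + x 5 * s 3) + a (v .z135) * (x 4 * x 5 + x 5 * s 4)
      + a (v .z145) * (x 5 ^ 2 + x 5 * s 5)) * h.sq_one + (a (v .z2) + a (v .z12) * x 1
      + a (v .z25) * x 5
      + a (v .z125) * x 1 * x 5) * h.sq_two + (a (v .z3) + a (v .z12) * s 0 + a (v .z13) * x 1
      + a (v .z34) * x 4 + a (v .z35) * x 5 + a (v .z125) * x 5 * s 0 + a (v .z135) * x 1 * x 5
      + a (v .z345) * x 4 * x 5) * h.two_three + (a (v .z4) + a (v .z13) * s 0 + a (v .z14) * x 1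
      + a (v .z45) * x 5 + a (v .z135) * x 5 * s 0 + a (v .z145) * (x 1 * x 5
      + s 0 * s 6)) * h.two_four
      + (a (v .z34) * x 1 + a (v .z345) * x 1 * x 5) * h.sq_four + (a (v .z45) * x 1
      + a (v .z135) * x 1 * s 0 + a (v .z145) * (x 2 * s 0 - x 1 * s 1 + s 0 * s 2)
      + a (v .z345) * x 1 * x 3) * h.sq_five + (a (v .z345) * s 6) * h.cubic

lemma mul_fanExpand_3 (h : FanRelations (fun k ↦ algebraMap A R (t k)) x)
    (v : FanMonomial → A) : x 3 * fanExpand x v = fanExpand x (fanMul t 3 v) := by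
  simp only [fanExpand_apply, fanMul_3_apply, fanMulFun3, map_add, map_sub, map_neg, map_mul]
  set a := algebraMap A R
  set s : Fin 7 → R := fun k ↦ a (t k)
  linear_combination
    (a (v .z12) * (x 4 + s 4) + a (v .z13) * (x 5 + s 5) + a (v .z125) * (x 4 * x 5 + x 5 * s 4)
      + a (v .z135) * (x 5 ^ 2 + x 5 * s 5) + a (v .z145) * (x 5 * s 6 + s 5 * s 6)) * h.sq_one
      + (a (v .z2) + a (v .z12) * x 1 + a (v .z25) * x 5 + a (v .z125) * x 1 * x 5) * h.two_three
      + (a (v .z12) * s 0 + a (v .z34) * s 4 + a (v .z125) * x 5 * s 0 + a (v .z135) * s 0 * s 6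
      + a (v .z145) * x 1 * s 6 + a (v .z345) * x 5 * s 4) * h.two_four + (a (v .z3)
      + a (v .z13) * x 1
      + a (v .z34) * x 4 + a (v .z35) * x 5 + a (v .z135) * x 1 * x 5
      + a (v .z345) * x 4 * x 5) * h.sq_three
      + (a (v .z34) * (-s 2) + a (v .z345) * (-x 5 * s 2 + x 1 * s 6)) * h.sq_four
      + (a (v .z35) * x 1
      + a (v .z125) * x 1 * s 0 + a (v .z135) * (x 2 * s 0 - x 1 * s 1 + s 0 * s 2)
      + a (v .z145) * x 1 * x 2 + a (v .z345) * (x 1 * x 4 - x 3 * s 2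
      + x 1 * s 4)) * h.sq_five + (a (v .z14)
      + a (v .z145) * x 5) * h.cubic

lemma mul_fanExpand_4 (h : FanRelations (fun k ↦ algebraMap A R (t k)) x)
    (v : FanMonomial → A) : x 4 * fanExpand x v = fanExpand x (fanMul t 4 v) := by
  simp only [fanExpand_apply, fanMul_4_apply, fanMulFun4, map_add, map_sub, map_neg, map_mul,
    map_pow]
  set a := algebraMap A R
  set s : Fin 7 → R := fun k ↦ a (t k)
  linear_combination
    (a (v .z12) * (x 5 + s 5) + a (v .z125) * (x 5 ^ 2 + x 5 * s 5)
      + a (v .z135) * (x 5 * s 6 + s 5 * s 6)) * h.sq_one + (a (v .z2) + a (v .z12) * x 1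
      + a (v .z25) * x 5 + a (v .z125) * (x 1 * x 5 + s 0 * s 6) + a (v .z135) * x 1 * s 6
      + a (v .z345) * s 4 * s 6) * h.two_four + (a (v .z34) * (x 5 + s 5)
      + a (v .z345) * (x 5 ^ 2 + x 5 * s 5)) * h.sq_three + (a (v .z4) + a (v .z14) * x 1
      + a (v .z34) * x 3
      + a (v .z45) * x 5 + a (v .z145) * x 1 * x 5 + a (v .z345) * (x 3 * x 5
      - s 2 * s 6)) * h.sq_four
      + (a (v .z34) * x 1 + a (v .z25) * x 1 + a (v .z45) * x 3
      + a (v .z125) * (x 2 * s 0 - x 1 * s 1 + s 0 * s 2) + a (v .z135) * x 1 * x 2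
      + a (v .z145) * x 1 * x 3
      + a (v .z345) * (x 1 * x 5 - x 4 * s 2 - x 3 * s 3 + x 2 * s 4 + x 1 * s 5)) * h.sq_five
      + (a (v .z13)
      + a (v .z135) * x 5 + a (v .z145) * s 6) * h.cubic

lemma mul_fanExpand_5 (h : FanRelations (fun k ↦ algebraMap A R (t k)) x)
    (v : FanMonomial → A) : x 5 * fanExpand x v = fanExpand x (fanMul t 5 v) := by
  simp only [fanExpand_apply, fanMul_5_apply, fanMulFun5, map_add, map_sub, map_mul, map_pow]
  set a := algebraMap A R
  set s : Fin 7 → R := fun k ↦ a (t k)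
  linear_combination
    (a (v .z125) * (x 5 * s 6 + s 5 * s 6)) * h.sq_one + (a (v .z25) * s 6
      + a (v .z125) * x 1 * s 6) * h.two_four + (a (v .z345) * (x 5 * s 6 + s 5 * s 6)) * h.sq_three
      + (a (v .z45) * s 6 + a (v .z145) * x 1 * s 6 + a (v .z345) * x 3 * s 6) * h.sq_four
      + (a (v .z5)
      + a (v .z15) * x 1 + a (v .z25) * x 2 + a (v .z35) * x 3 + a (v .z45) * x 4
      + a (v .z125) * x 1 * x 2 + a (v .z135) * x 1 * x 3 + a (v .z145) * x 1 * x 4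
      + a (v .z345) * (x 3 * x 4 + x 1 * s 6)) * h.sq_five + (a (v .z135) * s 6) * h.cubic

lemma mul_fanExpand (hx : x 0 = algebraMap A R (t 0))
    (h : FanRelations (fun k ↦ algebraMap A R (t k)) x) (i : Fin 6) (v : FanMonomial → A) :
    x i * fanExpand x v = fanExpand x (fanMul t i v) := by
  fin_cases i
  · change x 0 * _ = fanExpand x (t 0 • v)
    rw [map_smul, Algebra.smul_def, hx]
  · exact mul_fanExpand_1 h v
  · exact mul_fanExpand_2 h v
  · exact mul_fanExpand_3 h v
  · exact mul_fanExpand_4 h v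
  · exact mul_fanExpand_5 h v

/-- If the variables act through `fanMul`, then the fan monomials are linearly independent. -/
lemma fanExpand_injective (ρ : R →ₐ[A] Module.End A (FanMonomial → A))
    (hρ : ∀ i, ρ (x i) = fanMul t i) :
    Function.Injective (fanExpand x : (FanMonomial → A) →ₗ[A] R) := by
  refine Function.LeftInverse.injective (g := fun r ↦ ρ r (Pi.single .one 1)) fun v ↦ ?_
  funext b
  simp only [fanExpand_apply, map_add, map_mul, hρ, AlgHom.commutes, LinearMap.add_apply,
    Module.End.mul_apply, Module.algebraMap_end_apply, fanMul_1_apply, fanMul_2_apply,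
    fanMul_3_apply, fanMul_4_apply, fanMul_5_apply]
  cases b <;>
  simp [fanMulFun1, fanMulFun2, fanMulFun3, fanMulFun4, fanMulFun5]

end FanExpansion

/-- The coordinates `y`, recovered from the parameters `s` and the coordinates `x`. -/
def fanY {R : Type*} [CommRing R] (s : Fin 7 → R) (x : Fin 6 → R) : Fin 6 → R :=
  ![x 1 + s 1, x 2 + s 2, x 3 + s 3, x 4 + s 4, x 5 + s 5, s 6]

lemma fanRelations_iff {R : Type*} [CommRing R] {s : Fin 7 → R} {x : Fin 6 → R}
    (hx : x 0 = s 0) :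
    FanRelations s x ↔ ∀ i j, fanGraph.Adj i j → x i * fanY s x j = x j * fanY s x i := by
  constructor
  · intro h
    suffices H : ∀ i j, (i, j) ∈ ([(0, 1), (1, 2), (1, 3), (1, 4), (2, 3), (3, 4), (4, 5)] :
        List (Fin 6 × Fin 6)) → x i * fanY s x j = x j * fanY s x i by
      rintro i j ⟨-, hij | hij⟩
      exacts [H i j hij, (H j i hij).symm]
    intro i j hij
    simp only [List.mem_cons, Prod.mk.injEq, List.not_mem_nil, or_false] at hij
    rcases hij with ⟨rfl, rfl⟩ | ⟨rfl, rfl⟩ | ⟨rfl, rfl⟩ | ⟨rfl, rfl⟩ | ⟨rfl, rfl⟩ | ⟨rfl, rfl⟩ |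
      ⟨rfl, rfl⟩ <;> simp only [fanY, Matrix.cons_val]
    · linear_combination (x 2 + s 2) * hx - h.sq_one
    · linear_combination -h.sq_two
    · linear_combination -h.two_three
    · linear_combination -h.two_four
    · linear_combination h.two_four - h.sq_three
    · linear_combination -h.sq_four
    · linear_combination -h.sq_five
  · intro h
    have h01 := h 0 1 (by simp [fanGraph])
    have h12 := h 1 2 (by simp [fanGraph])
    have h13 := h 1 3 (by simp [fanGraph])
    have h14 := h 1 4 (by simp [fanGraph])
    have h23 := h 2 3 (by simp [fanGraph])
    have h34 := h 3 4 (by simp [fanGraph])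
    have h45 := h 4 5 (by simp [fanGraph])
    simp only [fanY, Matrix.cons_val] at h01 h12 h13 h14 h23 h34 h45
    constructor
    · linear_combination (x 2 + s 2) * hx - h01
    · linear_combination -h12
    · linear_combination -h13
    · linear_combination -h14
    · linear_combination -h14 - h23
    · linear_combination -h34
    · linear_combination -h45

section FanAction

variable {A : Type*} [CommRing A] (t : Fin 7 → A)

/-- The algebra generated by the operators `fanMul t i`. -/
abbrev fanSubalgebra : Subalgebra A (Module.End A (FanMonomial → A)) :=
  Algebra.adjoin A (Set.range (fanMul t))

instance : CommRing (fanSubalgebra t) where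
  __ := (fanSubalgebra t).toRing
  mul_comm := by
    have := Algebra.isMulCommutative_adjoin A (s := Set.range (fanMul t)) (by
      rintro _ ⟨i, rfl⟩ _ ⟨j, rfl⟩
      exact commute_fanMul t i j)
    exact this.is_comm.comm

/-- The operator `fanMul t i` as an element of `fanSubalgebra t`. -/
def fanGen (i : Fin 6) : fanSubalgebra t :=
  ⟨fanMul t i, Algebra.subset_adjoin ⟨i, rfl⟩⟩

lemma fanGen_zero : fanGen t 0 = algebraMap A (fanSubalgebra t) (t 0) :=
  Subtype.ext (fanMul_zero t)

lemma fanRelations_fanGen :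
    FanRelations (fun k ↦ algebraMap A (fanSubalgebra t) (t k)) (fanGen t) := by
  constructor <;>
  · refine Subtype.ext (LinearMap.ext fun v ↦ funext fun b ↦ ?_)
    simp only [fanGen, Subalgebra.coe_mul, Subalgebra.coe_add, Subalgebra.coe_sub,
      Subalgebra.coe_algebraMap, Module.End.mul_apply, LinearMap.add_apply, LinearMap.sub_apply,
      Module.algebraMap_end_apply, Pi.add_apply, Pi.sub_apply, Pi.smul_apply, smul_eq_mul,
      fanMul_1_apply, fanMul_2_apply, fanMul_3_apply, fanMul_4_apply, fanMul_5_apply]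
    cases b <;>
    simp only [fanMulFun1, fanMulFun2, fanMulFun3, fanMulFun4, fanMulFun5] <;> ring

end FanAction

section FanRing

variable (K : Type*) [Field K]

/-- The coordinate ring of the binomial edge ideal of the fan graph. -/
abbrev FanRing : Type _ := MvPolynomial (Fin 6 ⊕ Fin 6) K ⧸ binomialEdgeIdeal K fanGraph

/-- The class of the variable `x i`. -/
def fanRingX (i : Fin 6) : FanRing K := Ideal.Quotient.mk _ (X (Sum.inl i))

/-- The class of the variable `y i`. -/
def fanRingY (i : Fin 6) : FanRing K := Ideal.Quotient.mk _ (X (Sum.inr i))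

/-- The system of parameters `x 0`, `y i - x (i + 1)`, `y 5`. -/
def fanParam : Fin 7 → FanRing K :=
  ![fanRingX K 0, fanRingY K 0 - fanRingX K 1, fanRingY K 1 - fanRingX K 2,
    fanRingY K 2 - fanRingX K 3, fanRingY K 3 - fanRingX K 4, fanRingY K 4 - fanRingX K 5,
    fanRingY K 5]

instance : Algebra (MvPolynomial (Fin 7) K) (FanRing K) :=
  (aeval (fanParam K)).toRingHom.toAlgebra

instance : Module (MvPolynomial (Fin 7) K) (FanRing K) := Algebra.toModule

lemma algebraMap_fanRing_X (k : Fin 7) :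
    algebraMap (MvPolynomial (Fin 7) K) (FanRing K) (X k) = fanParam K k :=
  aeval_X _ _

lemma algebraMap_fanRing_C (c : K) :
    algebraMap (MvPolynomial (Fin 7) K) (FanRing K) (C c) = Ideal.Quotient.mk _ (C c) :=
  aeval_C _ _

lemma fanY_fanParam : fanY (fanParam K) (fanRingX K) = fanRingY K := by
  funext i
  fin_cases i <;> simp [fanY, fanParam]

lemma fanRelations_fanRing :
    FanRelations (fun k ↦ algebraMap (MvPolynomial (Fin 7) K) (FanRing K) (X k))
      (fanRingX K) := by
  simp only [algebraMap_fanRing_X]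
  refine (fanRelations_iff rfl).mpr fun i j hij ↦ ?_
  rw [fanY_fanParam, ← sub_eq_zero]
  exact Ideal.Quotient.eq_zero_iff_mem.mpr (Ideal.subset_span ⟨i, j, hij, rfl⟩)

/-- The coefficient homomorphism into the algebra of operators, sending `x i` to `fanGen X i`. -/
def fanPolyAction : MvPolynomial (Fin 6 ⊕ Fin 6) K →+*
    fanSubalgebra (X : Fin 7 → MvPolynomial (Fin 7) K) :=
  eval₂Hom ((algebraMap (MvPolynomial (Fin 7) K) _).comp C)
    (Sum.elim (fanGen X) (fanY (fun k ↦ algebraMap (MvPolynomial (Fin 7) K) _ (X k)) (fanGen X)))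

lemma fanPolyAction_eq_zero (f : MvPolynomial (Fin 6 ⊕ Fin 6) K)
    (hf : f ∈ binomialEdgeIdeal K fanGraph) : fanPolyAction K f = 0 := by
  suffices H : binomialEdgeIdeal K fanGraph ≤ RingHom.ker (fanPolyAction K) from H hf
  refine Ideal.span_le.mpr ?_
  rintro _ ⟨i, j, hij, rfl⟩
  have h := (fanRelations_iff (fanGen_zero _)).mp
    (fanRelations_fanGen (X : Fin 7 → MvPolynomial (Fin 7) K)) i j hij
  simpa [fanPolyAction, sub_eq_zero] using h

/-- The action of the coordinate ring on the free module on the fan monomials. -/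
def fanAction : FanRing K →ₐ[MvPolynomial (Fin 7) K]
    fanSubalgebra (X : Fin 7 → MvPolynomial (Fin 7) K) where
  __ := Ideal.Quotient.lift _ (fanPolyAction K) (fanPolyAction_eq_zero K)
  commutes' a := by
    change ((Ideal.Quotient.lift _ (fanPolyAction K) (fanPolyAction_eq_zero K)).comp
      (algebraMap _ _)) a = _
    congr 1
    refine MvPolynomial.ringHom_ext (fun c ↦ ?_) fun k ↦ ?_
    · rw [RingHom.comp_apply, algebraMap_fanRing_C, Ideal.Quotient.lift_mk]
      simp [fanPolyAction]
    · rw [RingHom.comp_apply, algebraMap_fanRing_X]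
      fin_cases k <;> simp [fanParam, fanRingX, fanRingY, fanPolyAction, fanY, fanGen_zero]

lemma fanAction_fanRingX (i : Fin 6) : fanAction K (fanRingX K i) = fanGen X i := by
  change fanPolyAction K (X (Sum.inl i)) = _
  simp [fanPolyAction]

lemma fanExpand_fanRingX_surjective :
    Function.Surjective
      (fanExpand (A := MvPolynomial (Fin 7) K) (fanRingX K)) := by
  have hmul (i : Fin 6) (v : FanMonomial → MvPolynomial (Fin 7) K) :=
    mul_fanExpand (algebraMap_fanRing_X K 0).symm (fanRelations_fanRing K) i v
  intro r
  obtain ⟨p, rfl⟩ := Ideal.Quotient.mk_surjective r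
  change _ ∈ LinearMap.range (fanExpand (A := MvPolynomial (Fin 7) K) (fanRingX K))
  induction p using MvPolynomial.induction_on with
  | C c =>
    refine ⟨Pi.single .one (C c), ?_⟩
    simp [fanExpand_apply, algebraMap_fanRing_C]
  | add p q hp hq =>
    rw [map_add]
    exact add_mem hp hq
  | mul_X p i hp =>
    rw [map_mul, mul_comm]
    have hx (i : Fin 6) : fanRingX K i * Ideal.Quotient.mk _ p ∈
        LinearMap.range (fanExpand (A := MvPolynomial (Fin 7) K) (fanRingX K)) := by
      obtain ⟨v, hv⟩ := hp
      exact ⟨_, by rw [← hv, hmul]⟩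
    have hs (k : Fin 7) : fanParam K k * Ideal.Quotient.mk _ p ∈
        LinearMap.range (fanExpand (A := MvPolynomial (Fin 7) K) (fanRingX K)) := by
      rw [← algebraMap_fanRing_X, ← Algebra.smul_def]
      exact Submodule.smul_mem _ _ hp
    rcases i with i | i
    · exact hx i
    · change fanRingY K i * _ ∈ _
      rw [← fanY_fanParam]
      fin_cases i
      · exact (add_mul (fanRingX K 1) (fanParam K 1) _).symm ▸ add_mem (hx 1) (hs 1)
      · exact (add_mul (fanRingX K 2) (fanParam K 2) _).symm ▸ add_mem (hx 2) (hs 2)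
      · exact (add_mul (fanRingX K 3) (fanParam K 3) _).symm ▸ add_mem (hx 3) (hs 3)
      · exact (add_mul (fanRingX K 4) (fanParam K 4) _).symm ▸ add_mem (hx 4) (hs 4)
      · exact (add_mul (fanRingX K 5) (fanParam K 5) _).symm ▸ add_mem (hx 5) (hs 5)
      · exact hs 6

/-- The coordinate ring is free on the fan monomials over the ring of parameters. -/
def fanRingEquiv :
    (FanMonomial → MvPolynomial (Fin 7) K) ≃ₗ[MvPolynomial (Fin 7) K] FanRing K :=
  LinearEquiv.ofBijective (fanExpand (fanRingX K))
    ⟨fanExpand_injective ((Subalgebra.val _).comp (fanAction K)) fun i ↦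
      congrArg Subtype.val (fanAction_fanRingX K i), fanExpand_fanRingX_surjective K⟩

lemma fanParam_mem_gradedMaxQuot (k : Fin 7) :
    fanParam K k ∈ gradedMaxQuot (binomialEdgeIdeal K fanGraph) := by
  have hvar (a : Fin 6 ⊕ Fin 6) : Ideal.Quotient.mk (binomialEdgeIdeal K fanGraph) (X a) ∈
      gradedMaxQuot (binomialEdgeIdeal K fanGraph) :=
    Ideal.mem_map_of_mem _ (Ideal.subset_span ⟨a, rfl⟩)
  fin_cases k
  · exact hvar _
  · exact sub_mem (hvar _) (hvar _)
  · exact sub_mem (hvar _) (hvar _)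
  · exact sub_mem (hvar _) (hvar _)
  · exact sub_mem (hvar _) (hvar _)
  · exact sub_mem (hvar _) (hvar _)
  · exact hvar _

end FanRing

/-- For the graph with vertex set `{1,…,6}` and edge set
`{{1,2},{2,3},{2,4},{2,5},{3,4},{4,5},{5,6}}`, the ring `S/J_G` is Cohen–Macaulay. -/
theorem isCMQuot_binomialEdgeIdeal_fanGraph (K : Type*) [Field K] :
    IsCMQuot (binomialEdgeIdeal K fanGraph) := by
  have := Module.Free.of_equiv (fanRingEquiv K)
  have := Module.Finite.equiv (fanRingEquiv K)
  have : Nonempty FanMonomial := ⟨.one⟩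
  have := (fanRingEquiv K).symm.toEquiv.nontrivial
  exact ringDepth_eq_ringKrullDim_of_finite_free (n := 7) _ fun k ↦
    algebraMap_fanRing_X K k ▸ fanParam_mem_gradedMaxQuot K k

end
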